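/- For all β(0,1)-trees S and T with root(S) = 1 and T nontrivial, and every integer i with 1 ≤ i ≤ open(T), open(μ_i(S,T)) = i − 1 + open(S). -/

import Mathlib

/-!
Write `x` for the `i`-th open node of `T`. The root of `S` has label 1, so the labels of its
children sum to 0.

* Below and at `x`: in `μ_i(S,T)` the rightmost path continues from `x` into the children of `S`,
  and whether a node is open depends only on its children. Hence `x` and its descendants contribute
  exactly `open(S)` open nodes.
* Above `x`: a node on the path is open according to whether its rightmost child is a non-leaf
  moderate node. If that child is not a leaf in `T`, its label and the sum of its children's labels
  both increase by one (for `x` itself the latter increase comes from `y`, as the children of `S`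
  have labels summing to 0), so moderateness is preserved. If that child is a leaf, it is `x` and it
  becomes an excessive node, with label 1 and children all labeled 0; neither a leaf nor an
  excessive child makes its parent open. This is `nonleafModerate_muT`. So exactly the `i - 1` open
  nodes of `T` above `x` remain open.

`openCount_muT` combines the two points by induction along the rightmost path.
-/

/-- Labeled rooted plane trees: each node carries a natural-number label and an
ordered list of subtrees. -/
inductive BTree : Type
  | node : ℕ → List BTree → BTree
deriving Repr

namespace BTree

/-- The trivial β(0,1)-tree ε: a single node labeled 0. -/
def eps : BTree := node 0 []

/-- The label of the root of a tree. -/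
def label : BTree → ℕ
  | node n _ => n

/-- The list of subtrees of the root. -/
def children : BTree → List BTree
  | node _ ts => ts

/-- The sum of the labels of the children of the root. -/
def childSum (t : BTree) : ℕ := (t.children.map label).sum

/-- Validity condition for non-root nodes of a β(0,1)-tree: leaves have label 0,
and the label of every node exceeds the sum of its children's labels by at most one. -/
inductive ValidSub : BTree → Prop
  | mk (n : ℕ) (ts : List BTree) :
      (ts = [] → n = 0) →
      n ≤ (ts.map label).sum + 1 →
      (∀ t ∈ ts, ValidSub t) →
      ValidSub (node n ts)

/-- `t` is a β(0,1)-tree: the trivial tree is the single node labeled 0; otherwise the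
root label is one more than the sum of its children's labels, and every non-root node
has label at most one more than the sum of its children's labels, leaves having label 0. -/
def IsBeta (t : BTree) : Prop :=
  (t.children = [] → t.label = 0) ∧
  (t.children ≠ [] → t.label = childSum t + 1) ∧
  ∀ c ∈ t.children, ValidSub c

mutual
/-- The rightmost path of a tree, from the root to the rightmost leaf; each node on
the path is recorded together with its full subtree. -/
def rpath : BTree → List BTree
  | node n ts => node n ts :: rpathL ts
def rpathL : List BTree → List BTree
  | [] => []
  | [t] => rpath t
  | _ :: t :: ts => rpathL (t :: ts)
end

/-- A node is moderate if its label does not exceed the sum of its children's labels. -/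
def moderate (t : BTree) : Bool := decide (t.label ≤ childSum t)

/-- A node (on the rightmost path) is open iff it is a leaf (i.e. it is the rightmost
leaf), or its rightmost child is a non-leaf moderate node. -/
def isOpenNode (t : BTree) : Bool :=
  match t.children.getLast? with
  | none => true
  | some c => !c.children.isEmpty && moderate c

/-- The statistic `root`: the label of the root. -/
def rootStat (t : BTree) : ℕ := t.label

/-- The statistic `open`: the number of open nodes (all of which lie on the
rightmost path), with open(ε) = 0. -/
def openStat : BTree → ℕ
  | node 0 [] => 0
  | t => (rpath t).countP isOpenNode

/-- The statistic `rmod`: the number of moderate nodes on the rightmost path,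
with rmod(ε) = 0. -/
def rmodStat : BTree → ℕ
  | node 0 [] => 0
  | t => (rpath t).countP moderate

mutual
/-- The number of nodes of a tree. -/
def size : BTree → ℕ
  | node _ ts => 1 + sizeL ts
def sizeL : List BTree → ℕ
  | [] => 0
  | t :: ts => size t + sizeL ts
end

mutual
/-- The number of excessive nodes of a tree (nodes whose label exceeds the sum of the
labels of their children). -/
def excT : BTree → ℕ
  | node n ts => (if (ts.map label).sum < n then 1 else 0) + excL ts
def excL : List BTree → ℕ
  | [] => 0
  | t :: ts => excT t + excL ts
end

/-- The sum U ⊕ V of two trees: identify the two roots into a new root labeled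
root(U) + root(V) − 1, its children being those of U followed by those of V. -/
def oplus (u v : BTree) : BTree := node (u.label + v.label - 1) (u.children ++ v.children)

/-- Relabel the root. -/
def setLabel (i : ℕ) (t : BTree) : BTree := node i t.children

/-- λ_i(T): join a new root, labeled i+1, by an edge to the old root, which is relabeled i. -/
def lam (i : ℕ) (t : BTree) : BTree := node (i + 1) [setLabel i t]

/-- Iterated ⊕ of a list of trees (ε for the empty list). -/
def oplusList : List BTree → BTree
  | [] => eps
  | [t] => t
  | t :: ts => oplus t (oplusList ts)

/-- ρ(T₁,…,T_k) = λ₀(T₁) ⊕ ⋯ ⊕ λ₀(T_k). -/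
def rho (Ts : List BTree) : BTree := oplusList (Ts.map (lam 0))

/-- Add one to the label of the root. -/
def incRoot (t : BTree) : BTree := node (t.label + 1) t.children

mutual
/-- Walk down the rightmost path of a tree looking for the i-th open node x, adding one
to each label on the way (through x, and through the rightmost child y of x if x is not
a leaf); at x, append the children of S. -/
def muT (S : BTree) : ℕ → BTree → BTree
  | i, node n ts =>
    if isOpenNode (node n ts) && decide (i ≤ 1) then
      if ts.isEmpty then node (n + 1) S.children
      else node (n + 1) (ts.dropLast ++ [incRoot (ts.getLastD eps)] ++ S.children)
    else
      node (n + 1) (muL S (if isOpenNode (node n ts) then i - 1 else i) ts)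
def muL (S : BTree) (i : ℕ) : List BTree → List BTree
  | [] => []
  | [t] => [muT S i t]
  | t :: ts => t :: muL S i ts
end

/-- μ_i(S,T): identify the i-th open node x on the rightmost path of T with the root of
S, keeping the label of x, and add one to each node on the rightmost path of T between
the root and y (inclusive), where y = x if x is a leaf and otherwise y is the rightmost
child of x.  (In particular μ₁(S,ε) = S when root(S) = 1.) -/
def mu (i : ℕ) (S T : BTree) : BTree := muT S i T

mutual
/-- Walk down the rightmost path of a tree adding j to every label; at the rightmost
leaf, attach the children of T. -/
def nuT (T : BTree) (j : ℕ) : BTree → BTree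
  | node n [] => node (n + j) T.children
  | node n ts => node (n + j) (nuL T j ts)
def nuL (T : BTree) (j : ℕ) : List BTree → List BTree
  | [] => []
  | [t] => [nuT T j t]
  | t :: ts => t :: nuL T j ts
end

/-- ν_i(S,T): identify the rightmost leaf x of S with the root of T, keeping the zero
label of x, and add i − 1 to each node on the rightmost path of S between the root and
x (inclusive).  (In particular ν₁(S,ε) = S.) -/
def nu (i : ℕ) (S T : BTree) : BTree := nuT T (i - 1) S

/-- σ(T₁,…,T_k) = μ₁(ρ(T_{k−1},…,T₁,ε), T_k). -/
def sigma (Ts : List BTree) : BTree :=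
  mu 1 (rho (Ts.dropLast.reverse ++ [eps])) (Ts.getLastD eps)

/-- The maximal suffix of a list of trees all of whose root labels are 0. -/
def zeroSuffix : List BTree → List BTree
  | [] => []
  | t :: ts =>
    let z := zeroSuffix ts
    if z.length = ts.length ∧ t.label = 0 then t :: z else z

/-- Subtract one from the label of the root. -/
def decRoot (t : BTree) : BTree := node (t.label - 1) t.children

mutual
/-- Inverse of μ on β(0,1)-trees with root label > 1: walk down the rightmost path to
the parent x of the first node labeled 0 on the path (subtracting one from the labels
on the way); the maximal zero-labeled suffix of the children of x is the list of
children of S, the rest (with the label of its last element decremented) are the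
children of x in T.  Returns the pair (T, S) such that the input is μ_i(S,T). -/
def decT : BTree → BTree × BTree
  | node n ts =>
    if (ts.getLastD eps).label = 0 then
      let zs := zeroSuffix ts
      let ps := ts.take (ts.length - zs.length)
      (node (n - 1) (if ps.isEmpty then [] else ps.dropLast ++ [decRoot (ps.getLastD eps)]),
       node 1 zs)
    else
      (node (n - 1) (decL ts).1, (decL ts).2)
def decL : List BTree → List BTree × BTree
  | [] => ([], eps)
  | [t] => ([(decT t).1], (decT t).2)
  | t :: ts => (t :: (decL ts).1, (decL ts).2)
end

/-- Restore the root label of a β(0,1)-tree whose root label was forgotten: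
ε for a single node, and otherwise one plus the sum of the children's labels. -/
def makeRoot : BTree → BTree
  | node _ [] => eps
  | node _ ts => node ((ts.map label).sum + 1) ts

/-- Fueled version of the map g.  A β(0,1)-tree with root label 1 is ρ(T₁,…,T_k) where
the Tⱼ are recovered from the children via `makeRoot`, and g maps it to
σ(g(T₁),…,g(T_k)); a β(0,1)-tree U with root label > 1 is μ_i(S,T) where (T,S) = decT U
and i = open(U) + 1 − open(S) (since open(μ_i(S,T)) = i − 1 + open(S)), and g maps it
to ν_i(g(S),g(T)); finally g(ε) = ε. -/
def gF : ℕ → BTree → BTree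
  | 0, t => t
  | fuel + 1, t =>
    match t with
    | node 0 _ => t
    | node 1 cs => sigma (cs.map fun c => gF fuel (makeRoot c))
    | node _ _ =>
      nu (openStat t + 1 - openStat (decT t).2) (gF fuel (decT t).2) (gF fuel (decT t).1)

/-- The map g on β(0,1)-trees: g(ε) = ε, g(ρ(T₁,…,T_k)) = σ(g(T₁),…,g(T_k)), and
g(μ_i(S,T)) = ν_i(g(S), g(T)).  (The number of nodes suffices as fuel since all
recursive calls are on trees with strictly fewer nodes.) -/
def g (t : BTree) : BTree := gF (size t) t


/-- The number of open nodes on the rightmost path; this differs from `openStat` only at `ε`, where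
it is 1. -/
def openCount (t : BTree) : ℕ := (rpath t).countP isOpenNode

/-- Whether a tree is a non-leaf with moderate root, the condition a rightmost child must satisfy
for its parent to be open. -/
def nonleafModerate (t : BTree) : Bool := !t.children.isEmpty && moderate t

theorem openStat_eq_openCount {t : BTree} (h : t ≠ eps) : openStat t = openCount t := by
  unfold openStat
  split
  · exact absurd rfl h
  · rfl

theorem IsBeta.validSub {t : BTree} (h : IsBeta t) : ValidSub t := by
  obtain ⟨n, ts⟩ := t
  obtain ⟨h1, h2, h3⟩ := h
  refine ValidSub.mk n ts h1 ?_ h3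
  by_cases hts : ts = []
  · have := h1 hts
    simp only [label] at this
    omega
  · exact (h2 hts).le

theorem rpathL_append (l : List BTree) {m : List BTree} (hm : m ≠ []) :
    rpathL (l ++ m) = rpathL m := by
  induction l with
  | nil => rfl
  | cons a l ih =>
    obtain ⟨b, r, hbr⟩ := List.exists_cons_of_ne_nil (List.append_ne_nil_of_right_ne_nil l hm)
    rw [List.cons_append, ← ih, hbr, rpathL]

theorem muL_concat (S : BTree) (i : ℕ) (l : List BTree) (c : BTree) :
    muL S i (l ++ [c]) = l ++ [muT S i c] := by
  induction l with
  | nil => simp [muL]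
  | cons a l ih =>
    obtain ⟨b, r, hbr⟩ := List.exists_cons_of_ne_nil (List.append_ne_nil_of_right_ne_nil l (List.cons_ne_nil c []))
    rw [List.cons_append, List.cons_append, ← ih, hbr, muL]
    simp

theorem label_muT (S : BTree) (i : ℕ) (t : BTree) : label (muT S i t) = label t + 1 := by
  obtain ⟨n, ts⟩ := t
  rw [muT]
  split_ifs <;> rfl

theorem isOpenNode_concat (n : ℕ) (l : List BTree) (c : BTree) :
    isOpenNode (node n (l ++ [c])) = nonleafModerate c := by
  simp [isOpenNode, children, nonleafModerate]

theorem openCount_concat (n : ℕ) (l : List BTree) (c : BTree) :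
    openCount (node n (l ++ [c])) = openCount c + if nonleafModerate c then 1 else 0 := by
  rw [openCount, rpath, List.countP_cons, rpathL_append _ (List.cons_ne_nil _ _), rpathL,
    isOpenNode_concat, openCount]

/-- Changing the root label of a non-leaf, or adding children to the left of the existing ones, does
not affect the number of open nodes. -/
theorem openCount_append (m : ℕ) (l : List BTree) {S : BTree} (hS : S.children ≠ []) :
    openCount (node m (l ++ S.children)) = openCount S := by
  obtain ⟨n, r⟩ := S
  simp only [children] at hS ⊢
  obtain rfl | ⟨r, c, rfl⟩ := List.eq_nil_or_concat' r
  · exact absurd rfl hS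
  · rw [← List.append_assoc, openCount_concat, openCount_concat]

/-- The case where the root is the open node at which `S` is attached. -/
theorem muT_concat_of_target (S : BTree) {i : ℕ} (n : ℕ) (l : List BTree) {c : BTree}
    (hc : nonleafModerate c = true) (hi : i ≤ 1) :
    muT S i (node n (l ++ [c])) = node (n + 1) (l ++ [incRoot c] ++ S.children) := by
  rw [muT, isOpenNode_concat]
  simp [hc, hi]

/-- The case where `S` is attached strictly below the root. -/
theorem muT_concat_of_not_target (S : BTree) {i : ℕ} (n : ℕ) (l : List BTree) {c : BTree}
    (h : ¬ (nonleafModerate c = true ∧ i ≤ 1)) :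
    muT S i (node n (l ++ [c])) =
      node (n + 1) (l ++ [muT S (if nonleafModerate c then i - 1 else i) c]) := by
  rw [muT, isOpenNode_concat, muL_concat, if_neg (by simpa using h)]

/-- The modification made by `μ` preserves the condition that makes a parent open. The leaf label
being 0 matters: a leaf turns into a node of label 1, hence an excessive one. -/
theorem nonleafModerate_muT (S : BTree) (hS0 : childSum S = 0) {t : BTree}
    (ht : ValidSub t) (i : ℕ) :
    nonleafModerate (muT S i t) = nonleafModerate t := by
  obtain ⟨n, ts, h0, -, -⟩ := ht
  obtain rfl | ⟨l, c, rfl⟩ := List.eq_nil_or_concat' ts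
  · have hn : n = 0 := h0 rfl
    subst hn
    by_cases hi : i ≤ 1
    · have : muT S i (node 0 []) = node 1 S.children := by simp [muT, isOpenNode, children, hi]
      rw [this]
      have hm : moderate (node 1 S.children) = false := by
        change decide (1 ≤ childSum S) = false
        simp [hS0]
      rw [nonleafModerate, hm, Bool.and_false]
      rfl
    · simp [muT, muL, isOpenNode, children, hi, nonleafModerate]
  · by_cases h : nonleafModerate c = true ∧ i ≤ 1
    · rw [muT_concat_of_target S n l h.1 h.2]
      obtain ⟨m, r⟩ := S
      obtain ⟨k, cs⟩ := c
      simp only [childSum, children] at hS0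
      rw [Bool.eq_iff_iff]
      simp [nonleafModerate, moderate, childSum, children, incRoot, label, hS0]
      omega
    · rw [muT_concat_of_not_target S n l h, Bool.eq_iff_iff]
      simp [nonleafModerate, moderate, childSum, children, label_muT]
      simp [label]
      omega

theorem openCount_muT (S : BTree) (hS0 : childSum S = 0) (hSne : S.children ≠ []) {t : BTree}
    (ht : ValidSub t) (i : ℕ) (hi1 : 1 ≤ i) (hi2 : i ≤ openCount t) :
    openCount (muT S i t) = i - 1 + openCount S := by
  induction ht generalizing i with
  | mk n ts h0 hn hts ih =>
    obtain rfl | ⟨l, c, rfl⟩ := List.eq_nil_or_concat' ts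
    · have hle : openCount (node n []) = 1 := by
        simp [openCount, rpath, rpathL, isOpenNode, children]
      obtain rfl : i = 1 := by omega
      have : muT S 1 (node n []) = node (n + 1) S.children := by
        simp [muT, isOpenNode, children]
      rw [this]
      simpa using openCount_append (n + 1) [] hSne
    · by_cases h : nonleafModerate c = true ∧ i ≤ 1
      · obtain rfl : i = 1 := by omega
        rw [muT_concat_of_target S n l h.1 h.2]
        simpa using openCount_append (n + 1) (l ++ [incRoot c]) hSne
      · rw [openCount_concat] at hi2
        have hc : c ∈ l ++ [c] := by simp
        rw [muT_concat_of_not_target S n l h, openCount_concat, nonleafModerate_muT S hS0 (hts c hc)]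
        by_cases hm : nonleafModerate c = true
        · simp only [hm, if_true, true_and] at h hi2 ⊢
          rw [ih c hc (i - 1) (by omega) (by omega)]
          omega
        · simp only [hm] at hi2 ⊢
          exact ih c hc i hi1 hi2

/-- For all β(0,1)-trees S and T with root(S) = 1 and T nontrivial, and every integer i
with 1 ≤ i ≤ open(T), open(μ_i(S,T)) = i − 1 + open(S). -/
theorem open_mu (S T : BTree) (i : ℕ) (hS : IsBeta S) (hT : IsBeta T)
    (hrS : rootStat S = 1) (hTnt : T ≠ eps) (hi1 : 1 ≤ i) (hi2 : i ≤ openStat T) :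
    openStat (mu i S T) = i - 1 + openStat S := by
  have hS0 : childSum S = 0 := by
    by_cases h : S.children = []
    · simp [childSum, h]
    · have := hS.2.1 h
      simp only [rootStat] at hrS
      omega
  have hSne : S.children ≠ [] := by
    intro h
    have := hS.1 h
    simp only [rootStat] at hrS
    omega
  have hSeps : S ≠ eps := by
    rintro rfl
    exact hSne rfl
  have hmu : mu i S T ≠ eps := by
    intro h
    have := label_muT S i T
    rw [← mu, h] at this
    simp [eps, label] at this
  rw [openStat_eq_openCount hTnt] at hi2
  rw [openStat_eq_openCount hmu, openStat_eq_openCount hSeps]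
  exact openCount_muT S hS0 hSne hT.validSub i hi1 hi2

end BTree
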